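/- arXiv:2512.07003 — 2 statements merged into one kernel-verified Lean document; each statement's English description precedes it below -/
import Mathlib

section
/- Let X be uniformly distributed on the unit simplex Δ^n = {x ∈ [0,∞)^n : ∑ x_i = 1}. Then the variance of the maximum coordinate satisfies n^2 · Var(max_i X_i) = (n H_2(n) - H_1(n)^2) / (n+1), where H_k(n) = ∑_{i=1}^n i^{-k}. -/
open MeasureTheory ProbabilityTheory

/-- The uniform probability distribution on the unit simplex
`Δ^n = {x ∈ [0,∞)^n : x_1 + ... + x_n = 1}`, i.e. normalized `(n-1)`-dimensional
Hausdorff (surface) measure on the simplex; equivalently `Dirichlet(1,...,1)`. -/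
noncomputable def simplexUniform (n : ℕ) : Measure (Fin n → ℝ) :=
  (μH[(n : ℝ) - 1] {x : Fin n → ℝ | (∀ i, 0 ≤ x i) ∧ ∑ i, x i = 1})⁻¹ •
    (μH[(n : ℝ) - 1]).restrict {x : Fin n → ℝ | (∀ i, 0 ≤ x i) ∧ ∑ i, x i = 1}

namespace SimplexMax
open Filter Topology Set

noncomputable def Hsum (n : ℕ) : ℝ := ∑ i ∈ Finset.range n, (1 : ℝ) / (i + 1)
noncomputable def Asum (n : ℕ) (t : ℝ) : ℝ :=
  ∑ i ∈ Finset.range n, (1 - Real.exp (-t)) ^ (i + 1) / ((i : ℝ) + 1)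

lemma one_sub_pow_nonneg (n : ℕ) {t : ℝ} (ht : 0 ≤ t) : 0 ≤ 1 - (1 - Real.exp (-t)) ^ n := by
  have h1 : Real.exp (-t) ≤ 1 := by simpa using ht
  have h2 := Real.exp_pos (-t)
  have := pow_le_one₀ (n := n) (a := 1 - Real.exp (-t)) (by linarith) (by linarith)
  linarith

lemma hasDerivAt_base (t : ℝ) : HasDerivAt (fun t : ℝ => 1 - Real.exp (-t)) (Real.exp (-t)) t := by
  have := ((hasDerivAt_neg t).exp).const_sub 1
  simpa using this

lemma hasDerivAt_Asum (n : ℕ) (t : ℝ) :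
    HasDerivAt (Asum n) (1 - (1 - Real.exp (-t)) ^ n) t := by
  have h : HasDerivAt (Asum n) (∑ i ∈ Finset.range n,
      (1 - Real.exp (-t)) ^ i * Real.exp (-t)) t := by
    unfold Asum
    apply HasDerivAt.fun_sum
    intro i _
    have := ((hasDerivAt_base t).pow (i + 1)).div_const ((i : ℝ) + 1)
    refine this.congr_deriv ?_
    have : (i : ℝ) + 1 ≠ 0 := by positivity
    push_cast
    field_simp
  refine h.congr_deriv ?_
  rw [← Finset.sum_mul]
  have := geom_sum_mul (1 - Real.exp (-t)) n
  linarith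

lemma tendsto_base : Tendsto (fun t : ℝ => 1 - Real.exp (-t)) atTop (𝓝 1) := by
  have := (Real.tendsto_exp_neg_atTop_nhds_zero).const_sub (1 : ℝ)
  simpa using this

lemma tendsto_Asum (n : ℕ) : Tendsto (Asum n) atTop (𝓝 (Hsum n)) := by
  unfold Asum Hsum
  apply tendsto_finsetSum
  intro i _
  have := (tendsto_base.pow (i + 1)).div_const ((i : ℝ) + 1)
  simpa using this

lemma Asum_zero (n : ℕ) : Asum n 0 = 0 := by
  simp [Asum]

lemma lint_one (n : ℕ) :
    ∫⁻ t in Ioi (0 : ℝ), ENNReal.ofReal (1 - (1 - Real.exp (-t)) ^ n) =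
      ENNReal.ofReal (Hsum n) := by
  have hp : ∀ x ∈ Ioi (0 : ℝ), 0 ≤ 1 - (1 - Real.exp (-x)) ^ n :=
    fun x hx => one_sub_pow_nonneg n (le_of_lt hx)
  rw [← ofReal_integral_eq_lintegral_ofReal]
  · rw [integral_Ioi_of_hasDerivAt_of_nonneg' (fun x _ => hasDerivAt_Asum n x) hp (tendsto_Asum n),
      Asum_zero, sub_zero]
  · exact integrableOn_Ioi_deriv_of_nonneg' (fun x _ => hasDerivAt_Asum n x) hp (tendsto_Asum n)
  · exact (ae_restrict_iff' measurableSet_Ioi).2 (Eventually.of_forall hp)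

noncomputable def Bsum (n : ℕ) (t : ℝ) : ℝ :=
  2 * t * (Asum n t - Hsum n) + 2 * ∑ j ∈ Finset.range n, Asum (j + 1) t / ((j : ℝ) + 1)

lemma hasDerivAt_Bsum (n : ℕ) (t : ℝ) :
    HasDerivAt (Bsum n) (2 * t * (1 - (1 - Real.exp (-t)) ^ n)) t := by
  have h1 : HasDerivAt (fun t : ℝ => ∑ j ∈ Finset.range n, Asum (j + 1) t / ((j : ℝ) + 1))
      (∑ j ∈ Finset.range n, (1 - (1 - Real.exp (-t)) ^ (j + 1)) / ((j : ℝ) + 1)) t := by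
    apply HasDerivAt.fun_sum
    intro i _
    exact (hasDerivAt_Asum (i + 1) t).div_const _
  have h2 := ((((hasDerivAt_id t).const_mul 2).mul
    ((hasDerivAt_Asum n t).sub_const (Hsum n)))).add (h1.const_mul 2)
  refine HasDerivAt.congr_deriv (f := Bsum n) h2 ?_
  have : ∑ j ∈ Finset.range n, (1 - (1 - Real.exp (-t)) ^ (j + 1)) / ((j : ℝ) + 1)
      = Hsum n - Asum n t := by
    unfold Hsum Asum
    rw [← Finset.sum_sub_distrib]
    exact Finset.sum_congr rfl fun i _ => by ring
  rw [this]
  simp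
  ring

lemma tendsto_t (n : ℕ) : Tendsto (fun t : ℝ => t * (Hsum n - Asum n t)) atTop (𝓝 0) := by
  have hb : Tendsto (fun t : ℝ => (n : ℝ) * (t ^ 1 * Real.exp (-t))) atTop (𝓝 0) := by
    simpa using (Real.tendsto_pow_mul_exp_neg_atTop_nhds_zero 1).const_mul (n : ℝ)
  refine tendsto_of_tendsto_of_tendsto_of_le_of_le' tendsto_const_nhds hb ?_ ?_
  all_goals
    filter_upwards [eventually_ge_atTop (0 : ℝ)] with t ht
    have e : Hsum n - Asum n t =
        ∑ j ∈ Finset.range n, (1 - (1 - Real.exp (-t)) ^ (j + 1)) / ((j : ℝ) + 1) := by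
      unfold Hsum Asum
      rw [← Finset.sum_sub_distrib]
      exact Finset.sum_congr rfl fun i _ => by ring
    rw [e]
  · apply mul_nonneg ht
    apply Finset.sum_nonneg
    intro i _
    exact div_nonneg (one_sub_pow_nonneg _ ht) (by positivity)
  · have : ∑ j ∈ Finset.range n, (1 - (1 - Real.exp (-t)) ^ (j + 1)) / ((j : ℝ) + 1)
        ≤ ∑ j ∈ Finset.range n, Real.exp (-t) := by
      apply Finset.sum_le_sum
      intro j _
      rw [div_le_iff₀ (by positivity)]
      have h2 : Real.exp (-t) ≤ 1 := by simpa using ht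
      have := one_add_mul_le_pow (a := -Real.exp (-t)) (by linarith) (j + 1)
      push_cast at this
      rw [← sub_eq_add_neg] at this
      linarith
    simp at this
    nlinarith

lemma sum_H (n : ℕ) : 2 * ∑ j ∈ Finset.range n, Hsum (j + 1) / ((j : ℝ) + 1) =
    Hsum n ^ 2 + ∑ i ∈ Finset.range n, (1 : ℝ) / (i + 1) ^ 2 := by
  induction n with
  | zero => simp [Hsum]
  | succ n ih =>
    rw [Finset.sum_range_succ, Finset.sum_range_succ, mul_add, ih]
    have : Hsum (n + 1) = Hsum n + 1 / (n + 1) := by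
      unfold Hsum
      rw [Finset.sum_range_succ]
    rw [this]
    field_simp
    ring

lemma tendsto_Bsum (n : ℕ) : Tendsto (Bsum n) atTop
    (𝓝 (Hsum n ^ 2 + ∑ i ∈ Finset.range n, (1 : ℝ) / (i + 1) ^ 2)) := by
  have h1 : Tendsto (fun t : ℝ => ∑ j ∈ Finset.range n, Asum (j + 1) t / ((j : ℝ) + 1)) atTop
      (𝓝 (∑ j ∈ Finset.range n, Hsum (j + 1) / ((j : ℝ) + 1))) := by
    apply tendsto_finsetSum
    intro i _
    exact (tendsto_Asum (i + 1)).div_const _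
  have := ((tendsto_t n).const_mul (-2)).add (h1.const_mul 2)
  rw [sum_H] at this
  simp only [mul_zero, zero_add] at this
  refine this.congr fun t => ?_
  unfold Bsum
  ring

lemma lint_two (n : ℕ) :
    ∫⁻ t in Ioi (0 : ℝ), ENNReal.ofReal (2 * t * (1 - (1 - Real.exp (-t)) ^ n)) =
      ENNReal.ofReal (Hsum n ^ 2 + ∑ i ∈ Finset.range n, (1 : ℝ) / (i + 1) ^ 2) := by
  have hp : ∀ x ∈ Ioi (0 : ℝ), 0 ≤ 2 * x * (1 - (1 - Real.exp (-x)) ^ n) :=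
    fun x hx => mul_nonneg (by have : (0:ℝ) < x := hx
                               linarith) (one_sub_pow_nonneg n (le_of_lt hx))
  rw [← ofReal_integral_eq_lintegral_ofReal]
  · rw [integral_Ioi_of_hasDerivAt_of_nonneg' (fun x _ => hasDerivAt_Bsum n x) hp (tendsto_Bsum n)]
    simp [Bsum, Asum_zero]
  · exact integrableOn_Ioi_deriv_of_nonneg' (fun x _ => hasDerivAt_Bsum n x) hp (tendsto_Bsum n)
  · exact (ae_restrict_iff' measurableSet_Ioi).2 (Eventually.of_forall hp)

/-- parametrization of the hyperplane `∑ x = s`. -/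
noncomputable def Phi (m : ℕ) (s : ℝ) (y : Fin m → ℝ) : Fin (m + 1) → ℝ :=
  Fin.cons (s - ∑ i, y i) y

noncomputable def psi (m : ℕ) : (Fin m → ℝ) →ₗ[ℝ] (Fin (m + 1) → ℝ) where
  toFun y := Phi m 0 y
  map_add' x y := by
    ext i
    refine Fin.cases ?_ (fun j => ?_) i
    · simp [Phi, Finset.sum_add_distrib]; ring
    · simp [Phi]
  map_smul' c y := by
    ext i
    refine Fin.cases ?_ (fun j => ?_) i
    · simp [Phi, Finset.mul_sum]
    · simp [Phi]

lemma psi_inj (m : ℕ) : Function.Injective (psi m) := by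
  intro x y h
  have h' : Phi m 0 x = Phi m 0 y := h
  ext i
  have := congrFun h' i.succ
  simpa [Phi] using this

lemma Phi_eq (m : ℕ) (s : ℝ) (y : Fin m → ℝ) : Phi m s y = Pi.single 0 s + psi m y := by
  ext i
  refine Fin.cases ?_ (fun j => ?_) i
  · simp [Phi, psi]; ring
  · simp [Phi, psi]

lemma sum_Phi (m : ℕ) (s : ℝ) (y : Fin m → ℝ) : ∑ i, Phi m s y i = s := by
  simp [Phi, Fin.sum_univ_succ]

lemma measurable_Phi (m : ℕ) (s : ℝ) : Measurable (Phi m s) := by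
  have : Phi m s = fun y => Pi.single 0 s + psi m y := funext (Phi_eq m s)
  rw [this]
  exact ((psi m).continuous_of_finiteDimensional.measurable).const_add _

lemma range_Phi (m : ℕ) (s : ℝ) (x : Fin (m + 1) → ℝ) (h : ∑ i, x i = s) :
    Phi m s (fun i => x i.succ) = x := by
  ext i
  refine Fin.cases ?_ (fun j => ?_) i
  · simp [Phi, ← h, Fin.sum_univ_succ]
  · simp [Phi]

lemma hausdorff_map (m : ℕ) : ∃ c : ENNReal, c ≠ 0 ∧ c ≠ ⊤ ∧
    (volume : Measure (Fin m → ℝ)).map (Phi m 1) =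
      c • (μH[(m : ℝ)] : Measure (Fin (m + 1) → ℝ)).restrict (range (Phi m 1)) := by
  let L : (Fin m → ℝ) ≃L[ℝ] LinearMap.range (psi m) :=
    (LinearEquiv.ofInjective (psi m) (psi_inj m)).toContinuousLinearEquiv
  let ι : LinearMap.range (psi m) → (Fin (m + 1) → ℝ) := fun w => Pi.single 0 1 + (w : Fin (m + 1) → ℝ)
  have hι : Isometry ι := by
    refine (isometry_add_left _).comp isometry_subtype_coe
  have hφ : Phi m 1 = ι ∘ L := by
    ext1 y
    rw [Phi_eq]
    rfl
  have hfr : Module.finrank ℝ (LinearMap.range (psi m)) = m := by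
    rw [← L.toLinearEquiv.finrank_eq]; simp
  have hH : (μH[(m : ℝ)] : Measure (LinearMap.range (psi m))).IsAddHaarMeasure := by
    have := isAddHaarMeasure_hausdorffMeasure (E := LinearMap.range (psi m))
    rwa [hfr] at this
  have hL : ((volume : Measure (Fin m → ℝ)).map L).IsAddHaarMeasure :=
    L.isAddHaarMeasure_map _
  let c := Measure.addHaarScalarFactor ((volume : Measure (Fin m → ℝ)).map L)
    (μH[(m : ℝ)] : Measure (LinearMap.range (psi m)))
  have hc : (volume : Measure (Fin m → ℝ)).map L = c • μH[(m : ℝ)] :=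
    Measure.isAddLeftInvariant_eq_smul _ _
  refine ⟨c, ?_, by simp, ?_⟩
  · have := Measure.addHaarScalarFactor_pos_of_isAddHaarMeasure
      ((volume : Measure (Fin m → ℝ)).map L) (μH[(m : ℝ)] : Measure (LinearMap.range (psi m)))
    exact_mod_cast this.ne'
  · rw [hφ, ← Measure.map_map hι.continuous.measurable L.continuous.measurable, hc,
      Measure.map_smul, hι.map_hausdorffMeasure (Or.inl (by positivity)),
      L.surjective.range_comp]
    rfl

noncomputable def e1 (x : ℝ) : ENNReal := (Ici (0 : ℝ)).indicator (fun x => ENNReal.ofReal (Real.exp (-x))) x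

noncomputable def Wt {n : ℕ} (x : Fin n → ℝ) : ENNReal := ∏ i, e1 (x i)

noncomputable def Mx {n : ℕ} (x : Fin n → ℝ) : ℝ := ⨆ i, x i

lemma measurable_e1 : Measurable e1 := by
  unfold e1
  exact Measurable.indicator (by fun_prop) measurableSet_Ici

lemma measurable_Wt {n : ℕ} : Measurable (Wt (n := n)) := by
  unfold Wt
  exact Finset.measurable_prod _ fun i _ => measurable_e1.comp (measurable_pi_apply i)

lemma measurable_Mx {n : ℕ} : Measurable (Mx (n := n)) := by
  unfold Mx
  exact Measurable.iSup fun i => measurable_pi_apply i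

lemma Wt_pos {n : ℕ} (x : Fin n → ℝ) (h : ∀ i, 0 ≤ x i) :
    Wt x = ENNReal.ofReal (Real.exp (-∑ i, x i)) := by
  rw [← Finset.sum_neg_distrib, Real.exp_sum, ENNReal.ofReal_prod_of_nonneg]
  · exact Finset.prod_congr rfl fun i _ => by simp [e1, h i]
  · intros; positivity

lemma Wt_zero {n : ℕ} (x : Fin n → ℝ) (h : ¬ ∀ i, 0 ≤ x i) : Wt x = 0 := by
  push Not at h
  obtain ⟨i, hi⟩ := h
  exact Finset.prod_eq_zero (Finset.mem_univ i) (by simp [e1, hi])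

lemma Mx_le {m : ℕ} (x : Fin (m + 1) → ℝ) (t : ℝ) : Mx x ≤ t ↔ ∀ i, x i ≤ t :=
  ciSup_le_iff (Finite.bddAbove_range x)

lemma Mx_nonneg {m : ℕ} (x : Fin (m + 1) → ℝ) (h : ∀ i, 0 ≤ x i) : 0 ≤ Mx x :=
  (h 0).trans (le_ciSup (Finite.bddAbove_range x) 0)

lemma Mx_smul {m : ℕ} (x : Fin (m + 1) → ℝ) (s : ℝ) (hs : 0 ≤ s) : Mx (s • x) = s * Mx x := by
  simp only [Mx, Pi.smul_apply, smul_eq_mul]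
  rw [Real.mul_iSup_of_nonneg hs]

lemma lint_cons {m : ℕ} (F : (Fin (m + 1) → ℝ) → ENNReal) (hF : Measurable F) :
    ∫⁻ x, F x = ∫⁻ a : ℝ, ∫⁻ y : Fin m → ℝ, F (Fin.cons a y) := by
  have h := (volume_preserving_piFinSuccAbove (fun _ : Fin (m + 1) => ℝ) 0).symm
  rw [← h.lintegral_comp hF, Measure.volume_eq_prod, lintegral_prod]
  · simp [MeasurableEquiv.piFinSuccAbove, Fin.insertNthEquiv]
  · exact (hF.comp (MeasurableEquiv.measurable _)).aemeasurable

lemma measurable_cons {m : ℕ} :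
    Measurable (fun p : ℝ × (Fin m → ℝ) => (Fin.cons p.1 p.2 : Fin (m + 1) → ℝ)) := by
  rw [measurable_pi_iff]
  intro i
  refine Fin.cases ?_ (fun j => ?_) i
  · simpa using measurable_fst
  · simp only [Fin.cons_succ]
    fun_prop

lemma lint_pow (f : ℝ → ENNReal) (hf : Measurable f) (n : ℕ) :
    ∫⁻ x : Fin n → ℝ, ∏ i, f (x i) = (∫⁻ t, f t) ^ n := by
  induction n with
  | zero =>
    rw [volume_pi, Measure.pi_of_empty]
    simp
  | succ n ih =>
    rw [lint_cons (fun x => ∏ i, f (x i)) (Finset.measurable_prod _ fun i _ => hf.comp (measurable_pi_apply i))]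
    simp only [Fin.prod_univ_succ, Fin.cons_zero, Fin.cons_succ]
    have : ∀ a, ∫⁻ y : Fin n → ℝ, f a * ∏ i, f (y i) = f a * (∫⁻ t, f t) ^ n := by
      intro a
      rw [lintegral_const_mul (f := fun y : Fin n → ℝ => ∏ i, f (y i)) _
        (Finset.measurable_prod _ fun i _ => hf.comp (measurable_pi_apply i)), ih]
    simp only [this]
    rw [lintegral_mul_const _ hf, pow_succ, mul_comm]

lemma lint_Phi {m : ℕ} (F : (Fin (m + 1) → ℝ) → ENNReal) (hF : Measurable F) :
    ∫⁻ x, F x = ∫⁻ s : ℝ, ∫⁻ y : Fin m → ℝ, F (Phi m s y) := by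
  rw [lint_cons F hF, lintegral_lintegral_swap]
  · have : ∀ y : Fin m → ℝ, ∫⁻ a : ℝ, F (Fin.cons a y) = ∫⁻ s : ℝ, F (Phi m s y) := by
      intro y
      exact (lintegral_sub_right_eq_self (fun a : ℝ => F (Fin.cons a y)) (∑ i, y i)).symm
    simp only [this]
    rw [lintegral_lintegral_swap]
    have h : Measurable (fun p : (Fin m → ℝ) × ℝ => (p.2 - ∑ i, p.1 i, p.1)) := by fun_prop
    exact ((hF.comp measurable_cons).comp h).aemeasurable
  · exact (hF.comp measurable_cons).aemeasurable

lemma lint_scale {m : ℕ} (f : (Fin m → ℝ) → ENNReal) (hf : Measurable f) (s : ℝ) (hs : 0 < s) :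
    ∫⁻ y, f y = ENNReal.ofReal (s ^ m) * ∫⁻ y, f (s • y) := by
  have h := Measure.map_addHaar_smul (volume : Measure (Fin m → ℝ)) hs.ne'
  rw [← lintegral_map (f := f) (g := fun y => s • y) hf (by fun_prop), h, lintegral_smul_measure,
    smul_eq_mul, ← mul_assoc, ← ENNReal.ofReal_mul (by positivity)]
  have : s ^ m ≠ 0 := by positivity
  simp [abs_of_pos hs, this]

lemma Phi_smul (m : ℕ) (s : ℝ) (y : Fin m → ℝ) : Phi m s (s • y) = s • Phi m 1 y := by
  ext i
  refine Fin.cases ?_ (fun j => ?_) i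
  · simp [Phi, ← Finset.mul_sum]; ring
  · simp [Phi]

def Tset (m : ℕ) : Set (Fin m → ℝ) := {y | ∀ i, 0 ≤ Phi m 1 y i}

lemma measurableSet_Tset (m : ℕ) : MeasurableSet (Tset m) := by
  have : Tset m = ⋂ i, {y | 0 ≤ Phi m 1 y i} := by ext; simp [Tset]
  rw [this]
  exact MeasurableSet.iInter fun i =>
    measurableSet_le measurable_const ((measurable_pi_apply i).comp (measurable_Phi m 1))

lemma lint_gamma (k : ℕ) :
    ∫⁻ s in Ioi (0 : ℝ), ENNReal.ofReal (s ^ k * Real.exp (-s)) = ENNReal.ofReal (k.factorial) := by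
  have h1 := Real.Gamma_eq_integral (s := (k : ℝ) + 1) (by positivity)
  have h2 := Real.GammaIntegral_convergent (s := (k : ℝ) + 1) (by positivity)
  rw [Real.Gamma_nat_eq_factorial] at h1
  rw [h1, ofReal_integral_eq_lintegral_ofReal h2]
  · refine setLIntegral_congr_fun measurableSet_Ioi fun s _ => ?_
    simp only [add_sub_cancel_right, Real.rpow_natCast]
    rw [mul_comm]
  · refine (ae_restrict_iff' measurableSet_Ioi).2 (Eventually.of_forall fun s hs => ?_)
    have : (0 : ℝ) < s := hs
    simp only [Pi.zero_apply]
    positivity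

lemma stepA (m k : ℕ) :
    ∫⁻ x : Fin (m + 1) → ℝ, Wt x * ENNReal.ofReal (Mx x ^ k) =
      ENNReal.ofReal ((m + k).factorial) *
        ∫⁻ y in Tset m, ENNReal.ofReal (Mx (Phi m 1 y) ^ k) := by
  have hF : Measurable (fun x : Fin (m + 1) → ℝ => Wt x * ENNReal.ofReal (Mx x ^ k)) :=
    measurable_Wt.mul (measurable_Mx.pow_const k).ennreal_ofReal
  rw [lint_Phi _ hF]
  have key : ∀ᵐ s : ℝ, ∫⁻ y : Fin m → ℝ, Wt (Phi m s y) * ENNReal.ofReal (Mx (Phi m s y) ^ k) =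
      (Ioi (0 : ℝ)).indicator (fun s => ENNReal.ofReal (s ^ (m + k) * Real.exp (-s)) *
        ∫⁻ y in Tset m, ENNReal.ofReal (Mx (Phi m 1 y) ^ k)) s := by
    have h0 : ∀ᵐ s : ℝ, s ≠ 0 := by
      simp [ae_iff, measure_singleton]
    filter_upwards [h0] with s hs0
    rcases lt_or_gt_of_ne hs0 with hs | hs
    · rw [indicator_of_notMem (by simpa using hs.le)]
      refine (lintegral_eq_zero_iff (hF.comp (measurable_Phi m s))).2 ?_
      refine Eventually.of_forall fun y => ?_
      have : Wt (Phi m s y) = 0 := by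
        apply Wt_zero
        intro h
        have := Finset.sum_nonneg (s := Finset.univ) fun i _ => h i
        rw [sum_Phi] at this
        linarith
      simp [this]
    · rw [indicator_of_mem (by simpa using hs)]
      rw [lint_scale (fun y => Wt (Phi m s y) * ENNReal.ofReal (Mx (Phi m s y) ^ k))
        (hF.comp (measurable_Phi m s)) s hs]
      have e : ∀ y, Wt (Phi m s (s • y)) * ENNReal.ofReal (Mx (Phi m s (s • y)) ^ k) =
          ENNReal.ofReal (Real.exp (-s) * s ^ k) * (Tset m).indicator
            (fun y => ENNReal.ofReal (Mx (Phi m 1 y) ^ k)) y := by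
        intro y
        by_cases hy : y ∈ Tset m
        · rw [indicator_of_mem hy, Wt_pos, sum_Phi, Phi_smul, Mx_smul _ _ hs.le, mul_pow,
            ENNReal.ofReal_mul (by positivity), ENNReal.ofReal_mul (by positivity), mul_assoc]
          intro i
          rw [Phi_smul]
          exact mul_nonneg hs.le (hy i)
        · rw [indicator_of_notMem hy, Wt_zero]
          · simp
          · intro h
            apply hy
            intro i
            have := h i
            rw [Phi_smul] at this
            exact nonneg_of_mul_nonneg_right this hs
      simp only [e]
      have hm : Measurable (fun y => ENNReal.ofReal (Mx (Phi m 1 y) ^ k)) :=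
        ((measurable_Mx.comp (measurable_Phi m 1)).pow_const k).ennreal_ofReal
      rw [lintegral_const_mul _ (hm.indicator (measurableSet_Tset m)),
        lintegral_indicator (measurableSet_Tset m), ← mul_assoc,
        ← ENNReal.ofReal_mul (by positivity)]
      congr 2
      ring
  rw [lintegral_congr_ae key, lintegral_indicator measurableSet_Ioi, lintegral_mul_const,
    lint_gamma]
  fun_prop

lemma lint_e1 : ∫⁻ t, e1 t = 1 := by
  unfold e1
  rw [lintegral_indicator measurableSet_Ici, setLIntegral_congr Ioi_ae_eq_Ici.symm]
  have := lint_gamma 0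
  simpa using this

lemma lint_e1_le (t : ℝ) (ht : 0 ≤ t) :
    ∫⁻ x, (Iic t).indicator e1 x = ENNReal.ofReal (1 - Real.exp (-t)) := by
  have h1 : (Iic t).indicator e1 =
      (Icc 0 t).indicator (fun x => ENNReal.ofReal (Real.exp (-x))) := by
    have : e1 = (Ici (0 : ℝ)).indicator (fun x => ENNReal.ofReal (Real.exp (-x))) := rfl
    rw [this, indicator_indicator]
    congr 1
    ext; simp [and_comm]
  rw [h1, lintegral_indicator measurableSet_Icc, setLIntegral_congr Ioc_ae_eq_Icc.symm,
    ← ofReal_integral_eq_lintegral_ofReal]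
  · rw [← intervalIntegral.integral_of_le ht, intervalIntegral.integral_eq_sub_of_hasDerivAt
      (fun x _ => hasDerivAt_base x)]
    · simp
    · exact Continuous.intervalIntegrable (by fun_prop) _ _
  · exact (Continuous.integrableOn_Icc (by fun_prop)).mono_set Ioc_subset_Icc_self
  · exact Eventually.of_forall fun x => (Real.exp_pos _).le

noncomputable def muW (n : ℕ) : Measure (Fin n → ℝ) := volume.withDensity Wt

lemma muW_univ (n : ℕ) : muW n univ = 1 := by
  rw [muW, withDensity_apply _ MeasurableSet.univ, Measure.restrict_univ]
  have := lint_pow e1 measurable_e1 n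
  unfold Wt
  rw [this, lint_e1, one_pow]

lemma muW_tail (m : ℕ) (t : ℝ) (ht : 0 ≤ t) :
    muW (m + 1) {x | t < Mx x} = ENNReal.ofReal (1 - (1 - Real.exp (-t)) ^ (m + 1)) := by
  have hms : MeasurableSet {x : Fin (m + 1) → ℝ | Mx x ≤ t} :=
    measurableSet_le measurable_Mx measurable_const
  have h1 : muW (m + 1) {x | Mx x ≤ t} = ENNReal.ofReal ((1 - Real.exp (-t)) ^ (m + 1)) := by
    rw [muW, withDensity_apply _ hms, ← lintegral_indicator hms]
    have : ∀ x : Fin (m + 1) → ℝ, {x : Fin (m + 1) → ℝ | Mx x ≤ t}.indicator Wt x =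
        ∏ i, (Iic t).indicator e1 (x i) := by
      intro x
      by_cases hx : Mx x ≤ t
      · rw [indicator_of_mem (by exact hx)]
        rw [Mx_le] at hx
        exact Finset.prod_congr rfl fun i _ => (indicator_of_mem (by exact hx i) _).symm
      · rw [indicator_of_notMem (by exact hx)]
        rw [Mx_le] at hx
        push Not at hx
        obtain ⟨i, hi⟩ := hx
        exact (Finset.prod_eq_zero (Finset.mem_univ i) (indicator_of_notMem (s := Iic t) (by simpa using hi) _)).symm
    simp only [this]
    rw [lint_pow _ (measurable_e1.indicator measurableSet_Iic), lint_e1_le t ht,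
      ENNReal.ofReal_pow]
    have : Real.exp (-t) ≤ 1 := by simpa using ht
    linarith
  have h2 : {x : Fin (m + 1) → ℝ | t < Mx x} = {x | Mx x ≤ t}ᶜ := by ext; simp
  rw [h2, measure_compl hms (by rw [h1]; simp), muW_univ, h1, ENNReal.ofReal_sub,
    ENNReal.ofReal_one]
  have : Real.exp (-t) ≤ 1 := by simpa using ht
  apply pow_nonneg
  linarith

lemma lint_muW (n k : ℕ) : ∫⁻ x, ENNReal.ofReal (Mx x ^ k) ∂(muW n) =
    ∫⁻ x : Fin n → ℝ, Wt x * ENNReal.ofReal (Mx x ^ k) := by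
  rw [muW, lintegral_withDensity_eq_lintegral_mul _ measurable_Wt
    (measurable_Mx.pow_const k).ennreal_ofReal]
  rfl

lemma Mx_ae (m : ℕ) : 0 ≤ᵐ[muW (m + 1)] (Mx : (Fin (m + 1) → ℝ) → ℝ) := by
  rw [muW, EventuallyLE, ae_withDensity_iff measurable_Wt]
  refine Eventually.of_forall fun x hx => Mx_nonneg x ?_
  by_contra h
  exact hx (Wt_zero x h)

lemma layer (m k : ℕ) : ∫⁻ x, ENNReal.ofReal (Mx x ^ (k + 1)) ∂(muW (m + 1)) =
    ∫⁻ t in Ioi (0 : ℝ), ENNReal.ofReal (((k : ℝ) + 1) * t ^ k *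
      (1 - (1 - Real.exp (-t)) ^ (m + 1))) := by
  have h := lintegral_comp_eq_lintegral_meas_lt_mul (g := fun t : ℝ => ((k : ℝ) + 1) * t ^ k)
    (muW (m + 1)) (Mx_ae m) measurable_Mx.aemeasurable
    (fun t _ => Continuous.intervalIntegrable (by fun_prop) _ _)
    ((ae_restrict_iff' measurableSet_Ioi).2 (Eventually.of_forall fun t ht => by
      have : (0 : ℝ) < t := ht
      positivity))
  have e : ∀ x : ℝ, ∫ t in (0 : ℝ)..x, ((k : ℝ) + 1) * t ^ k = x ^ (k + 1) := by
    intro x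
    rw [intervalIntegral.integral_const_mul, integral_pow]
    have : (k : ℝ) + 1 ≠ 0 := by positivity
    field_simp
    simp
  simp only [e] at h
  rw [h]
  refine setLIntegral_congr_fun measurableSet_Ioi fun t ht => ?_
  have ht' : (0 : ℝ) < t := ht
  rw [muW_tail m t ht'.le, mul_comm, ← ENNReal.ofReal_mul (by positivity)]

noncomputable def Gk (m k : ℕ) : ENNReal := ∫⁻ y in Tset m, ENNReal.ofReal (Mx (Phi m 1 y) ^ k)

lemma Gk_of (m k : ℕ) (v : ℝ)
    (h : ∫⁻ x, ENNReal.ofReal (Mx x ^ k) ∂(muW (m + 1)) = ENNReal.ofReal v) :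
    Gk m k = ENNReal.ofReal (v / (m + k).factorial) := by
  have hA := stepA m k
  rw [← lint_muW, h] at hA
  have hf : (0 : ℝ) < (m + k).factorial := by positivity
  rw [ENNReal.ofReal_div_of_pos hf, ENNReal.eq_div_iff (by simpa using (Nat.factorial_ne_zero _)) (by simp)]
  exact hA.symm

lemma Gk_zero (m : ℕ) : Gk m 0 = ENNReal.ofReal (1 / m.factorial) := by
  apply Gk_of
  simp [muW_univ]

lemma Gk_one (m : ℕ) : Gk m 1 = ENNReal.ofReal (Hsum (m + 1) / (m + 1).factorial) := by
  apply Gk_of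
  have := layer m 0
  simp only [Nat.cast_zero, zero_add, pow_zero, mul_one, one_mul] at this
  rw [this, lint_one]

lemma Gk_two (m : ℕ) : Gk m 2 = ENNReal.ofReal
    ((Hsum (m + 1) ^ 2 + ∑ i ∈ Finset.range (m + 1), (1 : ℝ) / (i + 1) ^ 2) /
      (m + 2).factorial) := by
  apply Gk_of
  rw [← lint_two]
  have := layer m 1
  norm_num at this
  rw [this]

lemma vol_T (m : ℕ) : volume (Tset m) = Gk m 0 := by
  simp [Gk]

lemma simplexUniform_eq (m : ℕ) : simplexUniform (m + 1) =
    (Gk m 0)⁻¹ • ((volume : Measure (Fin m → ℝ)).restrict (Tset m)).map (Phi m 1) := by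
  obtain ⟨c, hc0, hct, hc⟩ := hausdorff_map m
  have hd : ((m + 1 : ℕ) : ℝ) - 1 = m := by push_cast; ring
  unfold simplexUniform
  rw [hd]
  set D : Set (Fin (m + 1) → ℝ) := {x | (∀ i, 0 ≤ x i) ∧ ∑ i, x i = 1} with hD
  have hDm : MeasurableSet D := by
    have : D = (⋂ i, {x | 0 ≤ x i}) ∩ {x | ∑ i, x i = 1} := by ext; simp [hD]
    rw [this]
    refine (MeasurableSet.iInter fun i =>
      measurableSet_le measurable_const (measurable_pi_apply i)).inter ?_
    exact measurableSet_eq_fun (by fun_prop) measurable_const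
  have hsub : D ⊆ range (Phi m 1) := fun x hx => ⟨_, range_Phi m 1 x hx.2⟩
  have hpre : Phi m 1 ⁻¹' D = Tset m := by
    ext y
    simp [hD, Tset, sum_Phi]
  have h1 : ((volume : Measure (Fin m → ℝ)).restrict (Tset m)).map (Phi m 1) =
      c • (μH[(m : ℝ)] : Measure (Fin (m + 1) → ℝ)).restrict D := by
    rw [← hpre, ← Measure.restrict_map (measurable_Phi m 1) hDm, hc, Measure.restrict_smul,
      Measure.restrict_restrict_of_subset hsub]
  have h2 : Gk m 0 = c * μH[(m : ℝ)] D := by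
    have := congrArg (fun μ => μ univ) h1
    simp only [Measure.smul_apply, Measure.restrict_apply_univ, smul_eq_mul] at this
    rw [← this, Measure.map_apply (measurable_Phi m 1) MeasurableSet.univ, preimage_univ,
      Measure.restrict_apply_univ, vol_T]
  rw [h1, h2, smul_smul, ENNReal.mul_inv (Or.inl hc0) (Or.inl hct)]
  congr 1
  rw [mul_comm c⁻¹, mul_assoc, ENNReal.inv_mul_cancel hc0 hct, mul_one]

lemma lint_simplex (m k : ℕ) :
    ∫⁻ x, ENNReal.ofReal (Mx x ^ k) ∂(simplexUniform (m + 1)) = (Gk m 0)⁻¹ * Gk m k := by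
  rw [simplexUniform_eq, lintegral_smul_measure, smul_eq_mul, lintegral_map
    (measurable_Mx.pow_const k).ennreal_ofReal (measurable_Phi m 1)]
  rfl

lemma ae_simplex (m : ℕ) : ∀ᵐ x ∂(simplexUniform (m + 1)), 0 ≤ Mx x ∧ Mx x ≤ 1 := by
  rw [simplexUniform_eq]
  refine Measure.ae_smul_measure ?_ _
  have hm : MeasurableSet {x : Fin (m + 1) → ℝ | 0 ≤ Mx x ∧ Mx x ≤ 1} :=
    (measurableSet_le measurable_const measurable_Mx).inter
      (measurableSet_le measurable_Mx measurable_const)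
  rw [ae_map_iff (measurable_Phi m 1).aemeasurable hm, ae_restrict_iff' (measurableSet_Tset m)]
  refine Eventually.of_forall fun y hy => ⟨Mx_nonneg _ hy, ?_⟩
  rw [Mx_le]
  intro i
  exact (Finset.single_le_sum (fun j _ => hy j) (Finset.mem_univ i)).trans_eq (sum_Phi m 1 y)

lemma Gk_zero_inv (m : ℕ) : (Gk m 0)⁻¹ = ENNReal.ofReal (m.factorial) := by
  rw [Gk_zero, ← ENNReal.ofReal_inv_of_pos (by positivity), one_div, inv_inv]

lemma prob_simplex (m : ℕ) : IsProbabilityMeasure (simplexUniform (m + 1)) := by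
  constructor
  have := lint_simplex m 0
  simp only [pow_zero, ENNReal.ofReal_one, lintegral_one] at this
  rw [this, ENNReal.inv_mul_cancel]
  · rw [Gk_zero]
    simpa using (Nat.factorial_ne_zero m)
  · rw [Gk_zero]; simp

lemma int_simplex (m k : ℕ) (v : ℝ) (hv : Gk m k = ENNReal.ofReal v) (hv0 : 0 ≤ v) :
    ∫ x, Mx x ^ k ∂(simplexUniform (m + 1)) = m.factorial * v := by
  rw [integral_eq_lintegral_of_nonneg_ae, lint_simplex, Gk_zero_inv, hv,
    ← ENNReal.ofReal_mul (by positivity), ENNReal.toReal_ofReal (by positivity)]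
  · filter_upwards [ae_simplex m] with x hx
    exact pow_nonneg hx.1 k
  · exact (measurable_Mx.pow_const k).aestronglyMeasurable

lemma main (m : ℕ) :
    ((m + 1 : ℕ) : ℝ) ^ 2 * variance (Mx) (simplexUniform (m + 1))
      = (((m + 1 : ℕ) : ℝ) * ∑ i ∈ Finset.range (m + 1), (1 : ℝ) / (i + 1) ^ 2
          - Hsum (m + 1) ^ 2) / ((m + 1 : ℕ) + 1) := by
  have := prob_simplex m
  have hL : MemLp Mx 2 (simplexUniform (m + 1)) := by
    refine MemLp.of_bound measurable_Mx.aestronglyMeasurable 1 ?_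
    filter_upwards [ae_simplex m] with x hx
    rw [Real.norm_of_nonneg hx.1]
    exact hx.2
  have hH : 0 ≤ Hsum (m + 1) := Finset.sum_nonneg fun i _ => by positivity
  have hH2 : 0 ≤ ∑ i ∈ Finset.range (m + 1), (1 : ℝ) / (i + 1) ^ 2 :=
    Finset.sum_nonneg fun i _ => by positivity
  have i1 := int_simplex m 1 _ (Gk_one m) (by positivity)
  have i2 := int_simplex m 2 _ (Gk_two m) (by positivity)
  simp only [pow_one] at i1
  rw [variance_eq_sub hL]
  simp only [Pi.pow_apply]
  rw [i1, i2]
  generalize ∑ i ∈ Finset.range (m + 1), (1 : ℝ) / (i + 1) ^ 2 = S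
  generalize Hsum (m + 1) = H
  have hf : (m.factorial : ℝ) ≠ 0 := by positivity
  have e2 : ((m + 2).factorial : ℝ) = (m + 2) * ((m + 1) * m.factorial) := by
    rw [Nat.factorial_succ, Nat.factorial_succ]; push_cast; ring
  have e1 : ((m + 1).factorial : ℝ) = (m + 1) * m.factorial := by
    rw [Nat.factorial_succ]; push_cast; ring
  rw [e2, e1]
  push_cast
  have h1 : (m : ℝ) + 1 ≠ 0 := by positivity
  have h2 : (m : ℝ) + 2 ≠ 0 := by positivity
  have h3 : (m : ℝ) + 1 + 1 ≠ 0 := by positivity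
  field_simp
  ring

end SimplexMax

/-- If `X` is uniform on the unit simplex in `ℝ^n`, then
`n² · Var(max_i X_i) = (n H_2(n) - H_1(n)²)/(n+1)`. -/
theorem stmt_5 (n : ℕ) (hn : 0 < n) :
    (n : ℝ) ^ 2 * variance (fun x => ⨆ i, x i) (simplexUniform n)
      = ((n : ℝ) * ∑ i ∈ Finset.range n, (1 : ℝ) / (i + 1) ^ 2
          - (∑ i ∈ Finset.range n, (1 : ℝ) / (i + 1)) ^ 2) / (n + 1) := by
  obtain ⟨m, rfl⟩ : ∃ m, n = m + 1 := ⟨n - 1, by omega⟩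
  exact SimplexMax.main m
end

section
/- Let X be uniformly distributed on the unit simplex in R^n (Dirichlet(1,...,1)). Then E[(max_i X_i)^2] = (H_1(n)^2 + H_2(n)) / (n(n+1)). -/
open MeasureTheory ProbabilityTheory

open Filter Topology
open scoped ENNReal NNReal

lemma sx_split {m : ℕ} {g : (Fin (m+1) → ℝ) → ℝ≥0∞} (hg : Measurable g) :
    ∫⁻ x, g x = ∫⁻ y : Fin m → ℝ, ∫⁻ t : ℝ, g (Fin.cons t y) := by
  have h := (volume_preserving_piFinSuccAbove (fun _ : Fin (m+1) => ℝ) 0).symm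
  rw [← h.lintegral_comp hg, Measure.volume_eq_prod]
  have hc : ∀ p : ℝ × (Fin m → ℝ), (MeasurableEquiv.piFinSuccAbove (fun _ : Fin (m+1) => ℝ) 0).symm p
      = Fin.cons p.1 p.2 := by
    intro p
    simp [MeasurableEquiv.piFinSuccAbove, Fin.insertNthEquiv]
  have h3 := lintegral_prod_symm' (μ := (volume : Measure ℝ)) (ν := (volume : Measure (Fin m → ℝ))) _ (hg.comp h.measurable)
  simp only [Function.comp, hc] at h3
  simp only [hc]
  exact h3

lemma sx_prod {n : ℕ} {q : ℝ → ℝ≥0∞} (hq : Measurable q) :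
    ∫⁻ x : Fin n → ℝ, ∏ i, q (x i) = (∫⁻ t, q t) ^ n := by
  induction n with
  | zero => simp [volume_pi]
  | succ n ih =>
    rw [sx_split (by fun_prop)]
    simp only [Fin.prod_univ_succ, Fin.cons_zero, Fin.cons_succ]
    simp_rw [lintegral_mul_const _ hq]
    rw [lintegral_const_mul _ (by fun_prop), ih, pow_succ']

lemma sx_gamma (j : ℕ) :
    ∫⁻ s in Set.Ioi (0:ℝ), ENNReal.ofReal (Real.exp (-s) * s ^ j) = (j.factorial : ℝ≥0∞) := by
  have h := Real.Gamma_eq_integral (s := (j:ℝ)+1) (by positivity)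
  have h2 := Real.GammaIntegral_convergent (s := (j:ℝ)+1) (by positivity)
  rw [Real.Gamma_nat_eq_factorial] at h
  simp only [add_sub_cancel_right, Real.rpow_natCast] at h h2
  rw [← ofReal_integral_eq_lintegral_ofReal h2, ← h]
  · simp
  · filter_upwards [self_mem_ae_restrict measurableSet_Ioi] with s hs
    have : (0:ℝ) < s := hs
    simp only [Pi.zero_apply]; positivity

noncomputable def sxq (t : ℝ) : ℝ≥0∞ := (Set.Ici (0:ℝ)).indicator (fun t => ENNReal.ofReal (Real.exp (-t))) t

lemma sxq_meas : Measurable sxq := by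
  unfold sxq
  exact (by fun_prop : Measurable fun t : ℝ => ENNReal.ofReal (Real.exp (-t))).indicator measurableSet_Ici

lemma sxq_int : ∫⁻ t, sxq t = 1 := by
  unfold sxq
  rw [lintegral_indicator measurableSet_Ici, setLIntegral_congr Ioi_ae_eq_Ici.symm]
  simpa using sx_gamma 0

lemma sxq_int_le {t : ℝ} (ht : 0 < t) :
    ∫⁻ s, (Set.Iic t).indicator sxq s = ENNReal.ofReal (1 - Real.exp (-t)) := by
  have : ∀ s, (Set.Iic t).indicator sxq s
     = (Set.Icc 0 t).indicator (fun t => ENNReal.ofReal (Real.exp (-t))) s := by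
    intro s
    simp only [sxq, Set.indicator, Set.mem_Iic, Set.mem_Ici, Set.mem_Icc]
    grind
  simp_rw [this]
  rw [lintegral_indicator measurableSet_Icc, setLIntegral_congr Ioc_ae_eq_Icc.symm,
    ← ofReal_integral_eq_lintegral_ofReal]
  · rw [← intervalIntegral.integral_of_le ht.le]
    have := intervalIntegral.integral_comp_neg (a := 0) (b := t) Real.exp
    rw [this]; simp
  · exact (Continuous.integrableOn_Icc (by fun_prop)).mono_set Set.Ioc_subset_Icc_self
  · exact Filter.Eventually.of_forall fun s => (Real.exp_pos _).le

lemma sxq_prod {n : ℕ} (x : Fin n → ℝ) : ∏ i, sxq (x i) =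
    {x : Fin n → ℝ | ∀ i, 0 ≤ x i}.indicator (fun x => ENNReal.ofReal (Real.exp (-∑ i, x i))) x := by
  by_cases h : ∀ i, 0 ≤ x i
  · rw [Set.indicator_of_mem (by exact h), ← Finset.sum_neg_distrib, Real.exp_sum,
      ENNReal.ofReal_prod_of_nonneg (fun i _ => (Real.exp_pos _).le)]
    exact Finset.prod_congr rfl fun i _ => Set.indicator_of_mem (by exact h i) _
  · rw [Set.indicator_of_notMem (by exact h)]
    push Not at h
    obtain ⟨i, hi⟩ := h
    exact Finset.prod_eq_zero (Finset.mem_univ i) (Set.indicator_of_notMem (by simpa using hi) _)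

noncomputable def sxP (n : ℕ) : Measure (Fin n → ℝ) := volume.withDensity (fun x => ∏ i, sxq (x i))

lemma sxP_meas {n : ℕ} : Measurable (fun x : Fin n → ℝ => ∏ i, sxq (x i)) := by
  have := sxq_meas
  fun_prop

instance (n : ℕ) : IsProbabilityMeasure (sxP n) := ⟨by
  rw [sxP, withDensity_apply _ MeasurableSet.univ, Measure.restrict_univ, sx_prod sxq_meas, sxq_int, one_pow]⟩

lemma sxP_le {n : ℕ} {t : ℝ} (ht : 0 < t) :
    sxP n {x | ∀ i, x i ≤ t} = ENNReal.ofReal ((1 - Real.exp (-t)) ^ n) := by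
  have hm : MeasurableSet {x : Fin n → ℝ | ∀ i, x i ≤ t} := by measurability
  rw [sxP, withDensity_apply _ hm, ← lintegral_indicator hm, ENNReal.ofReal_pow (by simp [ht.le]), ← sxq_int_le ht,
    ← sx_prod (sxq_meas.indicator measurableSet_Iic)]
  congr 1; ext x
  by_cases h : ∀ i, x i ≤ t
  · rw [Set.indicator_of_mem (by exact h)]
    exact Finset.prod_congr rfl fun i _ => (Set.indicator_of_mem (by exact h i) _).symm
  · rw [Set.indicator_of_notMem (by exact h)]
    push Not at h
    obtain ⟨i, hi⟩ := h
    exact (Finset.prod_eq_zero (Finset.mem_univ i) (Set.indicator_of_notMem (s := Set.Iic t) (a := x i) (by simpa using hi) _)).symm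

lemma sx_sup_meas {n : ℕ} : Measurable (fun x : Fin n → ℝ => ⨆ i, x i) :=
  Measurable.iSup fun i => measurable_pi_apply i

lemma sxP_gt {n : ℕ} {t : ℝ} (ht : 0 < t) :
    sxP (n+1) {x | t < ⨆ i, x i} = ENNReal.ofReal (1 - (1 - Real.exp (-t)) ^ (n+1)) := by
  have : {x : Fin (n+1) → ℝ | t < ⨆ i, x i} = {x | ∀ i, x i ≤ t}ᶜ := by
    ext x
    simp [lt_ciSup_iff (Set.finite_range x).bddAbove]
  rw [this, prob_compl_eq_one_sub (by measurability), sxP_le ht, ENNReal.ofReal_sub _ (by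
    have : Real.exp (-t) ≤ 1 := by simp [ht.le]
    exact pow_nonneg (by linarith) _)]
  simp

lemma sxP_nonneg (n : ℕ) : ∀ᵐ x ∂(sxP n), ∀ i, 0 ≤ x i := by
  rw [sxP, ae_withDensity_iff sxP_meas]
  refine Filter.Eventually.of_forall fun x hx => ?_
  rw [sxq_prod] at hx
  exact Set.mem_of_indicator_ne_zero hx

noncomputable def sxp (n : ℕ) (t : ℝ) : ℝ := 1 - (1 - Real.exp (-t)) ^ n

lemma sxp_nonneg (n : ℕ) {t : ℝ} (ht : 0 ≤ t) : 0 ≤ sxp n t := by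
  have h1 : Real.exp (-t) ≤ 1 := by simp [ht]
  have := pow_le_one₀ (n := n) (by linarith : 0 ≤ 1 - Real.exp (-t)) (by linarith [Real.exp_pos (-t)])
  unfold sxp; linarith

lemma sxp_le (n : ℕ) {t : ℝ} (ht : 0 ≤ t) : sxp n t ≤ n * Real.exp (-t) := by
  have h1 : Real.exp (-t) ≤ 1 := by simp [ht]
  have := one_add_mul_le_pow (a := - Real.exp (-t)) (by linarith) n
  unfold sxp; rw [sub_eq_add_neg 1 (Real.exp (-t))]; linarith

lemma sxp_deriv (n : ℕ) (t : ℝ) :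
    HasDerivAt (sxp (n+1)) (-((n+1) * ((1 - Real.exp (-t)) ^ n * Real.exp (-t)))) t := by
  have h := ((((hasDerivAt_neg t).exp).const_sub 1).fun_pow (n+1)).const_sub 1
  refine HasDerivAt.congr_deriv (f := sxp (n+1)) h ?_
  push_cast; ring

lemma sxp_cont (n : ℕ) : Continuous (sxp n) := by unfold sxp; fun_prop

lemma sx_expint (j : ℕ) : IntegrableOn (fun s : ℝ => s ^ j * Real.exp (-s)) (Set.Ioi 0) := by
  have h2 := Real.GammaIntegral_convergent (s := (j:ℝ)+1) (by positivity)
  simp only [add_sub_cancel_right, Real.rpow_natCast] at h2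
  simpa [mul_comm] using h2

lemma sxp_int (j n : ℕ) : IntegrableOn (fun s : ℝ => s ^ j * sxp n s) (Set.Ioi 0) := by
  refine Integrable.mono' ((sx_expint j).const_mul n) ?_ ?_
  · have := sxp_cont n
    exact Continuous.aestronglyMeasurable (by fun_prop)
  · filter_upwards [self_mem_ae_restrict measurableSet_Ioi] with s hs
    have hs : (0:ℝ) < s := hs
    rw [Real.norm_of_nonneg (mul_nonneg (by positivity) (sxp_nonneg n hs.le))]
    calc s ^ j * sxp n s ≤ s ^ j * (n * Real.exp (-s)) := by gcongr; exact sxp_le n hs.le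
      _ = _ := by ring

lemma sxp_tendsto (j n : ℕ) : Tendsto (fun s : ℝ => s ^ j * sxp n s) atTop (𝓝 0) := by
  have h := (Real.tendsto_pow_mul_exp_neg_atTop_nhds_zero j).const_mul (n:ℝ)
  rw [mul_zero] at h
  refine squeeze_zero' ?_ ?_ h
  · filter_upwards [eventually_ge_atTop 0] with s hs
    exact mul_nonneg (by positivity) (sxp_nonneg n hs)
  · filter_upwards [eventually_ge_atTop 0] with s hs
    calc s ^ j * sxp n s ≤ s ^ j * (n * Real.exp (-s)) := by gcongr; exact sxp_le n hs
      _ = _ := by ring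

lemma sxp_succ (n : ℕ) (t : ℝ) : sxp (n+1) t = sxp n t + (1 - Real.exp (-t)) ^ n * Real.exp (-t) := by
  unfold sxp; ring

lemma sxd_int (j n : ℕ) : IntegrableOn
    (fun t : ℝ => t ^ j * ((1 - Real.exp (-t)) ^ n * Real.exp (-t))) (Set.Ioi 0) := by
  refine ((sxp_int j (n+1)).sub (sxp_int j n)).congr (Eventually.of_forall fun t => ?_)
  simp only [Pi.sub_apply, sxp_succ]; ring

lemma sxB (n : ℕ) : ∫ t in Set.Ioi (0:ℝ), sxp n t = ∑ i ∈ Finset.range n, (1 : ℝ) / (i + 1) := by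
  induction n with
  | zero => simp [sxp]
  | succ n ih =>
    have hi : IntegrableOn (sxp n) (Set.Ioi 0) := by simpa using sxp_int 0 n
    have hd := sxd_int 0 n
    simp only [pow_zero, one_mul] at hd
    rw [Finset.sum_range_succ, ← ih]
    simp_rw [sxp_succ]
    rw [integral_add hi hd]
    congr 1
    have ht : Tendsto (sxp (n+1)) atTop (𝓝 0) := by simpa using sxp_tendsto 0 (n+1)
    have := integral_Ioi_of_hasDerivAt_of_tendsto' (a := 0) (fun t _ => sxp_deriv n t) ((hd.const_mul _).neg) ht
    rw [integral_neg, integral_const_mul] at this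
    have h0 : sxp (n+1) 0 = 1 := by simp [sxp]
    rw [h0] at this
    have hn : (n:ℝ)+1 ≠ 0 := by positivity
    rw [eq_div_iff hn]
    linarith

lemma sxA (n : ℕ) : ∫ t in Set.Ioi (0:ℝ), t * sxp n t = ((∑ i ∈ Finset.range n, (1 : ℝ) / (i + 1)) ^ 2
          + ∑ i ∈ Finset.range n, (1 : ℝ) / (i + 1) ^ 2) / 2 := by
  induction n with
  | zero => simp [sxp]
  | succ n ih =>
    have hi : IntegrableOn (fun t => t * sxp n t) (Set.Ioi 0) := by simpa using sxp_int 1 n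
    have hi0 : IntegrableOn (sxp (n+1)) (Set.Ioi 0) := by simpa using sxp_int 0 (n+1)
    have hd := sxd_int 1 n
    simp only [pow_one] at hd
    have hB := sxB (n+1)
    simp_rw [sxp_succ, mul_add]
    rw [integral_add hi hd, ih]
    have ht : Tendsto (fun t => t * sxp (n+1) t) atTop (𝓝 0) := by simpa using sxp_tendsto 1 (n+1)
    have := integral_Ioi_of_hasDerivAt_of_tendsto' (a := 0) (f := fun t => t * sxp (n+1) t)
      (f' := fun t => sxp (n+1) t - (n+1) * (t * ((1 - Real.exp (-t)) ^ n * Real.exp (-t))))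
      (fun t _ => by
        refine ((hasDerivAt_id' t).fun_mul (sxp_deriv n t)).congr_deriv ?_
        ring) (hi0.sub (hd.const_mul _)) ht
    rw [integral_sub hi0 (hd.const_mul _), integral_const_mul, hB] at this
    have hn : (n:ℝ)+1 ≠ 0 := by positivity
    rw [Finset.sum_range_succ] at this ⊢
    rw [Finset.sum_range_succ]
    simp only [zero_mul, sub_zero] at this
    generalize (∫ t in Set.Ioi (0:ℝ), t * ((1 - Real.exp (-t)) ^ n * Real.exp (-t))) = D at *
    have hD : D = (∑ i ∈ Finset.range n, (1 : ℝ) / (i + 1) + 1/(n+1)) / (n+1) := by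
      field_simp at this ⊢; linarith
    rw [hD]
    field_simp
    ring

def sxphi (m : ℕ) (s : ℝ) (y : Fin m → ℝ) : Fin (m+1) → ℝ := Fin.cons (s - ∑ i, y i) y

lemma sxphi_cont (m : ℕ) : Continuous (fun p : ℝ × (Fin m → ℝ) => sxphi m p.1 p.2) := by
  refine continuous_pi fun i => ?_
  refine Fin.cases ?_ (fun i => ?_) i
  · simp only [sxphi, Fin.cons_zero]; fun_prop
  · simp only [sxphi, Fin.cons_succ]; fun_prop

lemma sxphi_lip (m : ℕ) (s : ℝ) : LipschitzWith (m+1) (sxphi m s) := by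
  refine LipschitzWith.of_dist_le_mul fun x y => ?_
  have hxy := dist_nonneg (x := x) (y := y)
  rw [dist_pi_le_iff (by positivity)]
  intro i
  refine Fin.cases ?_ (fun i => ?_) i
  · simp only [sxphi, Fin.cons_zero]
    rw [Real.dist_eq, sub_sub_sub_cancel_left, ← Finset.sum_sub_distrib]
    calc |∑ i, (y i - x i)| ≤ ∑ i, |y i - x i| := Finset.abs_sum_le_sum_abs _ _
      _ ≤ ∑ i : Fin m, dist x y := Finset.sum_le_sum fun i _ => by
          rw [abs_sub_comm, ← Real.dist_eq]; exact dist_le_pi_dist x y i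
      _ ≤ _ := by simp; nlinarith
  · simp only [sxphi, Fin.cons_succ]
    refine (dist_le_pi_dist x y i).trans ?_
    push_cast
    nlinarith [(Nat.cast_nonneg m : (0:ℝ) ≤ m)]

lemma sxtail_lip (m : ℕ) : LipschitzWith 1 (fun x : Fin (m+1) → ℝ => (fun i : Fin m => x i.succ)) := by
  refine LipschitzWith.of_dist_le_mul fun x y => ?_
  rw [dist_pi_le_iff (by positivity)]
  intro i
  simpa using dist_le_pi_dist x y i.succ

lemma sxphi_emb (m : ℕ) : Topology.IsClosedEmbedding (sxphi m 1) := by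
  refine Topology.IsClosedEmbedding.of_continuous_injective_isClosedMap (sxphi_lip m 1).continuous ?_ ?_
  · intro x y h
    exact (Fin.cons_inj.1 h).2
  · intro S hS
    have : sxphi m 1 '' S = {x | (fun i : Fin m => x i.succ) ∈ S ∧ ∑ i, x i = 1} := by
      ext x
      constructor
      · rintro ⟨y, hy, rfl⟩
        simp [sxphi, Fin.sum_univ_succ, hy]
      · rintro ⟨h1, h2⟩
        refine ⟨_, h1, ?_⟩
        rw [Fin.sum_univ_succ] at h2
        ext i
        refine Fin.cases ?_ (fun i => ?_) i
        · simp [sxphi, ← h2]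
        · simp [sxphi]
    rw [this]
    exact (hS.preimage (sxtail_lip m).continuous).inter (isClosed_eq (by fun_prop) continuous_const)

lemma sxphi_range (m : ℕ) : Set.range (sxphi m 1) = {x | ∑ i, x i = 1} := by
  ext x
  constructor
  · rintro ⟨y, rfl⟩
    simp [sxphi, Fin.sum_univ_succ]
  · intro h2
    refine ⟨fun i => x i.succ, ?_⟩
    simp only [Set.mem_ofPred_eq, Fin.sum_univ_succ] at h2
    ext i
    refine Fin.cases ?_ (fun i => ?_) i
    · simp [sxphi, ← h2]
    · simp [sxphi]

lemma sx_haus (m : ℕ) : ∃ c : ℝ≥0∞, c ≠ 0 ∧ c ≠ ∞ ∧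
    Measure.comap (sxphi m 1) (μH[(m:ℝ)] : Measure (Fin (m+1) → ℝ)) = c • volume := by
  have hE := (sxphi_emb m).measurableEmbedding
  set ν := Measure.comap (sxphi m 1) (μH[(m:ℝ)] : Measure (Fin (m+1) → ℝ)) with hν
  have hvol : (μH[(m:ℝ)] : Measure (Fin m → ℝ)) = volume := by
    simpa using hausdorffMeasure_pi_real (ι := Fin m)
  have happ : ∀ s, ν s = μH[(m:ℝ)] (sxphi m 1 '' s) := fun s => hE.comap_apply _ s
  have hle : ∀ s, ν s ≤ ((m+1 : ℝ≥0) : ℝ≥0∞) ^ (m:ℝ) * volume s := fun s => by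
    rw [happ, ← hvol]
    exact (sxphi_lip m 1).hausdorffMeasure_image_le (by positivity) s
  have hge : ∀ s, volume s ≤ ν s := fun s => by
    rw [happ, ← hvol]
    have := (sxtail_lip m).hausdorffMeasure_image_le (d := m) (by positivity) (sxphi m 1 '' s)
    rw [Set.image_image] at this
    simpa [sxphi] using this
  have hinv : ν.IsAddLeftInvariant := by
    refine ⟨fun v => ?_⟩
    ext s hs
    rw [Measure.map_apply (measurable_const_add v) hs, happ, happ]
    have : sxphi m 1 '' ((fun x => v + x) ⁻¹' s) = (fun x => sxphi m 0 v + x) ⁻¹' (sxphi m 1 '' s) := by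
      have key : ∀ x, sxphi m 0 v + sxphi m 1 x = sxphi m 1 (v + x) := by
        intro x; ext i
        refine Fin.cases ?_ (fun i => ?_) i
        · simp [sxphi, Finset.sum_add_distrib]; ring
        · simp [sxphi]
      ext x
      simp only [Set.mem_image, Set.mem_preimage]
      constructor
      · rintro ⟨y, hy, rfl⟩
        exact ⟨_, hy, (key y).symm⟩
      · rintro ⟨y, hy, h⟩
        refine ⟨y - v, by simpa using hy, ?_⟩
        have := key (y - v)
        rw [add_sub_cancel, h] at this
        exact add_left_cancel this
    rw [this]
    exact (IsometryEquiv.addLeft (sxphi m 0 v)).hausdorffMeasure_preimage _ _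
  have hfin : IsFiniteMeasureOnCompacts ν := ⟨fun K hK => (hle K).trans_lt
    (ENNReal.mul_lt_top (by simp) hK.measure_lt_top)⟩
  have heq := Measure.isAddLeftInvariant_eq_smul ν (volume : Measure (Fin m → ℝ))
  refine ⟨_, ?_, ENNReal.coe_ne_top, heq⟩
  intro h0
  have h1 := hge Set.univ
  have h2 : ν Set.univ = 0 := by
    rw [heq]
    have : ν.addHaarScalarFactor volume = 0 := by exact_mod_cast h0
    simp [this]
  rw [h2] at h1
  exact (NeZero.ne (volume : Measure (Fin m → ℝ))) (Measure.measure_univ_eq_zero.1 (le_antisymm h1 bot_le))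

lemma sx_haus_lint (m : ℕ) : ∃ c : ℝ≥0∞, c ≠ 0 ∧ c ≠ ∞ ∧ ∀ g : (Fin (m+1) → ℝ) → ℝ≥0∞,
    ∫⁻ x in {x | ∑ i, x i = 1}, g x ∂μH[(m:ℝ)] = c * ∫⁻ y, g (sxphi m 1 y) := by
  obtain ⟨c, h0, h1, h⟩ := sx_haus m
  refine ⟨c, h0, h1, fun g => ?_⟩
  have hE := (sxphi_emb m).measurableEmbedding
  rw [← sxphi_range, ← hE.map_comap, hE.lintegral_map, h, lintegral_smul_measure, smul_eq_mul]

lemma sx_scale (m k : ℕ) (G : (Fin (m+1) → ℝ) → ℝ≥0∞) (hG : Measurable G)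
    (hs : ∀ s : ℝ, 0 < s → ∀ x, G (fun i => s * x i) = ENNReal.ofReal (s ^ k) * G x) :
    ∫⁻ x, G x ∂(sxP (m+1)) = ((m+k).factorial : ℝ≥0∞) *
      ∫⁻ y, {x : Fin (m+1) → ℝ | ∀ i, 0 ≤ x i}.indicator G (sxphi m 1 y) := by
  set S : Set (Fin (m+1) → ℝ) := {x : Fin (m+1) → ℝ | ∀ i, 0 ≤ x i} with hS
  have hSm : MeasurableSet S := by measurability
  set K := S.indicator G with hK
  have hKm : Measurable K := hG.indicator hSm
  have hKs : ∀ s : ℝ, 0 < s → ∀ x, K (fun i => s * x i) = ENNReal.ofReal (s ^ k) * K x := by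
    intro s h x
    have : (fun i => s * x i) ∈ S ↔ x ∈ S := by
      simp [hS, mul_nonneg_iff_of_pos_left h]
    by_cases hx : x ∈ S
    · rw [hK, Set.indicator_of_mem hx, Set.indicator_of_mem (this.2 hx), hs s h]
    · rw [hK, Set.indicator_of_notMem hx, Set.indicator_of_notMem (by rwa [this]), mul_zero]
  have hphim : Measurable (fun p : ℝ × (Fin m → ℝ) => sxphi m p.1 p.2) := (sxphi_cont m).measurable
  have step1 : ∫⁻ x, G x ∂(sxP (m+1)) = ∫⁻ x, ENNReal.ofReal (Real.exp (-∑ i, x i)) * K x := by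
    rw [sxP, lintegral_withDensity_eq_lintegral_mul _ sxP_meas hG]
    congr 1; ext x
    simp only [Pi.mul_apply, sxq_prod]
    by_cases hx : x ∈ S
    · rw [hK, Set.indicator_of_mem hx, Set.indicator_of_mem hx]
    · rw [hK, Set.indicator_of_notMem hx, Set.indicator_of_notMem hx]; simp
  have step2 : ∀ y : Fin m → ℝ, ∫⁻ t : ℝ, ENNReal.ofReal (Real.exp (-∑ i, (Fin.cons t y : Fin (m+1) → ℝ) i)) * K (Fin.cons t y)
      = ∫⁻ s : ℝ, ENNReal.ofReal (Real.exp (-s)) * K (sxphi m s y) := by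
    intro y
    rw [← lintegral_sub_right_eq_self _ (∑ i, y i)]
    congr 1; ext s
    simp [Fin.sum_univ_succ, sxphi]
  rw [step1, sx_split (by fun_prop)]
  simp_rw [step2]
  rw [lintegral_lintegral_swap (by
    have : Measurable fun p : (Fin m → ℝ) × ℝ => sxphi m p.2 p.1 := hphim.comp measurable_swap
    exact Measurable.aemeasurable (by unfold Function.uncurry; fun_prop))]
  have step3 : ∀ s : ℝ, ∫⁻ y, ENNReal.ofReal (Real.exp (-s)) * K (sxphi m s y)
      = (Set.Ici (0:ℝ)).indicator (fun s => ∫⁻ y, ENNReal.ofReal (Real.exp (-s)) * K (sxphi m s y)) s := by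
    intro s
    by_cases h : 0 ≤ s
    · rw [Set.indicator_of_mem (by exact h)]
    · rw [Set.indicator_of_notMem (by exact h)]
      rw [← lintegral_zero (μ := (volume : Measure (Fin m → ℝ)))]
      congr 1; ext y
      rw [hK, Set.indicator_of_notMem, mul_zero]
      intro hy
      apply h
      have : ∑ i, sxphi m s y i = s := by simp [sxphi, Fin.sum_univ_succ]
      rw [← this]
      exact Finset.sum_nonneg fun i _ => hy i
  rw [lintegral_congr step3]
  rw [lintegral_indicator measurableSet_Ici, setLIntegral_congr Ioi_ae_eq_Ici.symm]
  have step4 : ∀ s ∈ Set.Ioi (0:ℝ), ∫⁻ y, ENNReal.ofReal (Real.exp (-s)) * K (sxphi m s y)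
      = ENNReal.ofReal (Real.exp (-s) * s ^ (m+k)) * ∫⁻ y, K (sxphi m 1 y) := by
    intro s hs0
    have hs0 : 0 < s := hs0
    have hm1 : Measurable (fun y => K (sxphi m s y)) :=
      hKm.comp (hphim.comp (measurable_const.prodMk measurable_id))
    rw [lintegral_const_mul _ hm1]
    have hmap := Measure.map_addHaar_smul (volume : Measure (Fin m → ℝ)) hs0.ne'
    have h1 : ∫⁻ y, K (sxphi m s y) ∂(Measure.map (s • ·) (volume : Measure (Fin m → ℝ)))
       = ENNReal.ofReal (s ^ k) * ∫⁻ y, K (sxphi m 1 y) := by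
      rw [lintegral_map hm1 (measurable_const_smul s), ← lintegral_const_mul' _ _ ENNReal.ofReal_ne_top]
      congr 1; ext y
      rw [← hKs s hs0]
      congr 1; ext i
      refine Fin.cases ?_ (fun i => ?_) i
      · simp [sxphi, mul_sub, Finset.mul_sum]
      · simp [sxphi]
    rw [hmap, lintegral_smul_measure, smul_eq_mul, abs_of_pos (by positivity)] at h1
    simp only [Module.finrank_fin_fun] at h1
    have h2 : ∫⁻ y, K (sxphi m s y) = ENNReal.ofReal (s ^ m) * (ENNReal.ofReal (s ^ k) * ∫⁻ y, K (sxphi m 1 y)) := by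
      rw [← h1, ← mul_assoc, ← ENNReal.ofReal_mul (by positivity), mul_inv_cancel₀ (by positivity)]
      simp
    rw [h2, pow_add, ENNReal.ofReal_mul (by positivity), ENNReal.ofReal_mul (by positivity)]
    ring
  rw [setLIntegral_congr_fun measurableSet_Ioi step4, lintegral_mul_const _ (by fun_prop), sx_gamma]

lemma sx_J (m : ℕ) : ∫⁻ x, ENNReal.ofReal ((⨆ i, x i) ^ 2) ∂(sxP (m+1))
    = ENNReal.ofReal ((∑ i ∈ Finset.range (m+1), (1 : ℝ) / (i + 1)) ^ 2
          + ∑ i ∈ Finset.range (m+1), (1 : ℝ) / (i + 1) ^ 2) := by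
  have h := lintegral_rpow_eq_lintegral_meas_lt_mul (sxP (m+1)) (f := fun x => ⨆ i, x i) (by
    filter_upwards [sxP_nonneg (m+1)] with x hx
    exact Real.iSup_nonneg hx) sx_sup_meas.aemeasurable (p := 2) (by norm_num)
  simp only [Real.rpow_two] at h
  rw [h]
  have : ∀ t ∈ Set.Ioi (0:ℝ), sxP (m+1) {x | t < ⨆ i, x i} * ENNReal.ofReal (t ^ ((2:ℝ)-1))
      = ENNReal.ofReal (t * sxp (m+1) t) := by
    intro t ht
    have ht : 0 < t := ht
    rw [sxP_gt ht, ENNReal.ofReal_mul ht.le, mul_comm]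
    norm_num [sxp]
  rw [setLIntegral_congr_fun measurableSet_Ioi this, ← ofReal_integral_eq_lintegral_ofReal, sxA,
    ← ENNReal.ofReal_mul (by norm_num)]
  · congr 1; ring
  · have := sxp_int 1 (m+1)
    simp only [pow_one] at this
    exact this
  · filter_upwards [self_mem_ae_restrict measurableSet_Ioi] with s hs
    have hs : (0:ℝ) < s := hs
    exact mul_nonneg hs.le (sxp_nonneg _ hs.le)

theorem stmt_6 (n : ℕ) (hn : 0 < n) :
    ∫ x, (⨆ i, x i) ^ 2 ∂(simplexUniform n)
      = ((∑ i ∈ Finset.range n, (1 : ℝ) / (i + 1)) ^ 2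
          + ∑ i ∈ Finset.range n, (1 : ℝ) / (i + 1) ^ 2) / ((n : ℝ) * (n + 1)) := by
  obtain ⟨m, rfl⟩ : ∃ m, n = m + 1 := ⟨n - 1, by omega⟩
  obtain ⟨c, hc0, hc1, hc⟩ := sx_haus_lint m
  set T := (∑ i ∈ Finset.range (m+1), (1 : ℝ) / (i + 1)) ^ 2
          + ∑ i ∈ Finset.range (m+1), (1 : ℝ) / (i + 1) ^ 2 with hT
  have hT0 : 0 ≤ T := by positivity
  have hSm : MeasurableSet {x : Fin (m+1) → ℝ | ∀ i, 0 ≤ x i} := by measurability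
  have hH : MeasurableSet {x : Fin (m+1) → ℝ | ∑ i, x i = 1} :=
    (isClosed_eq (by fun_prop) continuous_const).measurableSet
  have hset : {x : Fin (m+1) → ℝ | (∀ i, 0 ≤ x i) ∧ ∑ i, x i = 1}
      = {x | ∀ i, 0 ≤ x i} ∩ {x | ∑ i, x i = 1} := rfl
  have hset2 : ∀ g : (Fin (m+1) → ℝ) → ℝ≥0∞,
      ∫⁻ x in {x : Fin (m+1) → ℝ | (∀ i, 0 ≤ x i) ∧ ∑ i, x i = 1}, g x ∂μH[(m:ℝ)]
       = c * ∫⁻ y, {x : Fin (m+1) → ℝ | ∀ i, 0 ≤ x i}.indicator g (sxphi m 1 y) := by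
    intro g
    rw [← hc, lintegral_indicator hSm, Measure.restrict_restrict hSm, hset]
  have hmeas : Measurable fun x : Fin (m+1) → ℝ => ENNReal.ofReal ((⨆ i, x i) ^ 2) :=
    (sx_sup_meas.pow_const 2).ennreal_ofReal
  have h1 := sx_scale m 0 (fun _ => 1) measurable_const (by simp)
  have h2 := sx_scale m 2 (fun x => ENNReal.ofReal ((⨆ i, x i) ^ 2)) hmeas (by
    intro s hs x
    rw [← ENNReal.ofReal_mul (by positivity), ← mul_pow, Real.mul_iSup_of_nonneg hs.le])
  rw [sx_J, ← hT] at h2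
  simp only [lintegral_const, measure_univ, mul_one, add_zero] at h1
  have hA := hset2 (fun _ => 1)
  have hB := hset2 (fun x => ENNReal.ofReal ((⨆ i, x i) ^ 2))
  simp only [lintegral_const, one_mul, Measure.restrict_apply_univ] at hA
  set I1 := ∫⁻ y, {x : Fin (m+1) → ℝ | ∀ i, 0 ≤ x i}.indicator (fun _ => (1:ℝ≥0∞)) (sxphi m 1 y)
  set I2 := ∫⁻ y, {x : Fin (m+1) → ℝ | ∀ i, 0 ≤ x i}.indicator
    (fun x => ENNReal.ofReal ((⨆ i, x i) ^ 2)) (sxphi m 1 y)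
  have hd : ((m+1 : ℕ) : ℝ) - 1 = m := by push_cast; ring
  have hr1 : 1 = (m.factorial : ℝ) * I1.toReal := by
    simpa using congrArg ENNReal.toReal h1
  have hr2 : T = ((m+2).factorial : ℝ) * I2.toReal := by
    simpa [hT0] using congrArg ENNReal.toReal h2
  rw [integral_eq_lintegral_of_nonneg_ae (Eventually.of_forall fun x => sq_nonneg _)
    (sx_sup_meas.pow_const 2).aestronglyMeasurable, simplexUniform, hd,
    lintegral_smul_measure, hB, hA, smul_eq_mul, ENNReal.toReal_mul, ENNReal.toReal_inv,
    ENNReal.toReal_mul, ENNReal.toReal_mul]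
  have hcr : 0 < c.toReal := ENNReal.toReal_pos hc0 hc1
  have hf : (0:ℝ) < m.factorial := by positivity
  have hI1 : I1.toReal = 1 / m.factorial := by field_simp; linarith
  rw [hI1, hr2, Nat.factorial_succ, Nat.factorial_succ]
  push_cast
  field_simp
  try ring
end
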